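/- Let A and B be RLTs whose roots a and b are both Object nodes, with children subtrees indexed by edge-label sets κ(a) and κ(b), where A_k denotes the child subtree of A under edge label k and B_k that of B. Then the edit distance satisfies d(A, B) = Σ_{k ∈ κ(a) ∩ κ(b)} d(A_k, B_k) + Σ_{k ∈ κ(a) \ κ(b)} d(A_k, Λ) + Σ_{k ∈ κ(b) \ κ(a)} d(Λ, B_k). -/

import Mathlib

/- Formalization framework for "Tree edit distance for hierarchical data
compatible with HMIL paradigm".

Rooted labeled trees (RLTs): `Value` leaves carry a label `l : L` with data type
`τ l : DT`; `Bag` nodes have an unordered finite collection of children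
(represented by a `List` together with free, zero-cost permutation edit steps,
which realizes the multiset semantics); `Object` nodes have children indexed by
pairwise distinct string edge-labels (an association list with `Nodup` keys,
again with free reordering since it represents a finite map).  The empty tree Λ
is represented by `none : OTree L`. -/

namespace TED

inductive PreRLT (L : Type) : Type where
  | value : L → PreRLT L
  | bag   : List (PreRLT L) → PreRLT L
  | obj   : List (String × PreRLT L) → PreRLT L

namespace PreRLT

variable {L DT : Type}

/-- Node types ν: Value, Bag, Object. -/
inductive NT : Type where
  | value | bag | obj
deriving DecidableEq

/-- The kind of a node: its node type together with its label (Bag and Object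
nodes implicitly carry the null label). -/
inductive NodeKind (L : Type) : Type where
  | value : L → NodeKind L
  | bag : NodeKind L
  | obj : NodeKind L

def nt : PreRLT L → NT
  | .value _ => .value
  | .bag _ => .bag
  | .obj _ => .obj

def kind : PreRLT L → NodeKind L
  | .value l => .value l
  | .bag _ => .bag
  | .obj _ => .obj

def children : PreRLT L → List (PreRLT L)
  | .value _ => []
  | .bag cs => cs
  | .obj cs => cs.map Prod.snd

/-- A leaf is a node with no children (a Value node, an empty Bag or an empty
Object). -/
def IsLeaf (t : PreRLT L) : Prop := t.children = []

/-- Well-formedness: the edge labels of every Object node are pairwise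
distinct. -/
inductive WF : PreRLT L → Prop where
  | value (l : L) : WF (.value l)
  | bag {cs : List (PreRLT L)} : (∀ c ∈ cs, WF c) → WF (.bag cs)
  | obj {cs : List (String × PreRLT L)} :
      (cs.map Prod.fst).Nodup → (∀ p ∈ cs, WF p.2) → WF (.obj cs)

end PreRLT

open PreRLT

/-- Possibly empty rooted labeled tree; `none` is the empty tree Λ. -/
abbrev OTree (L : Type) := Option (PreRLT L)

def WFO {L : Type} : OTree L → Prop
  | none => True
  | some t => t.WF

/-- The cost function γ.  `rel l l'` is the cost of relabeling a Value node
(used only when `τ l = τ l'`), and `del k` is the cost γ(v, λ) of deleting a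
node of kind `k`; insertion cost γ(λ, v) equals the deletion cost γ(v, λ).
γ is a metric on labels of equal data type. -/
structure Cost (L DT : Type) (τ : L → DT) where
  rel : L → L → ℝ
  del : PreRLT.NodeKind L → ℝ
  del_nonneg : ∀ k, 0 ≤ del k
  rel_self : ∀ l, rel l l = 0
  rel_indisc : ∀ l l', τ l = τ l' → rel l l' = 0 → l = l'
  rel_symm : ∀ l l', rel l l' = rel l' l
  rel_triangle : ∀ l₁ l₂ l₃, τ l₁ = τ l₂ → τ l₂ = τ l₃ →
      rel l₁ l₃ ≤ rel l₁ l₂ + rel l₂ l₃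

variable {L DT : Type} {τ : L → DT}

/-- Schema-preserving edit steps on nonempty trees: relabel a Value node to a
label of the same data type, delete a leaf, insert a leaf (at an Object node
only with a fresh edge label).  The `bagPerm`/`objPerm` steps are invisible,
zero-cost reorderings of the list representation of the unordered children
collections. -/
inductive Estep (τ : L → DT) : PreRLT L → PreRLT L → Type where
  | relabel (l l' : L) (h : τ l = τ l') : Estep τ (.value l) (.value l')
  | bagPerm (cs : List (PreRLT L)) (σ : Equiv.Perm (Fin cs.length)) :
      Estep τ (.bag cs) (.bag (List.ofFn fun i => cs.get (σ i)))
  | objPerm (cs : List (String × PreRLT L)) (σ : Equiv.Perm (Fin cs.length)) :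
      Estep τ (.obj cs) (.obj (List.ofFn fun i => cs.get (σ i)))
  | bagCongr (pre post : List (PreRLT L)) {t t' : PreRLT L} (e : Estep τ t t') :
      Estep τ (.bag (pre ++ t :: post)) (.bag (pre ++ t' :: post))
  | objCongr (pre post : List (String × PreRLT L)) (k : String) {t t' : PreRLT L}
      (e : Estep τ t t') :
      Estep τ (.obj (pre ++ (k, t) :: post)) (.obj (pre ++ (k, t') :: post))
  | bagDel (cs : List (PreRLT L)) (t : PreRLT L) (h : t.IsLeaf) :
      Estep τ (.bag (t :: cs)) (.bag cs)
  | bagIns (cs : List (PreRLT L)) (t : PreRLT L) (h : t.IsLeaf) :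
      Estep τ (.bag cs) (.bag (t :: cs))
  | objDel (cs : List (String × PreRLT L)) (k : String) (t : PreRLT L) (h : t.IsLeaf) :
      Estep τ (.obj ((k, t) :: cs)) (.obj cs)
  | objIns (cs : List (String × PreRLT L)) (k : String) (t : PreRLT L) (h : t.IsLeaf)
      (hk : k ∉ cs.map Prod.fst) :
      Estep τ (.obj cs) (.obj ((k, t) :: cs))

/-- Cost of a single edit step. -/
def Estep.cost (C : Cost L DT τ) : {t t' : PreRLT L} → Estep τ t t' → ℝ
  | _, _, .relabel l l' _ => C.rel l l'
  | _, _, .bagPerm _ _ => 0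
  | _, _, .objPerm _ _ => 0
  | _, _, .bagCongr _ _ e => e.cost C
  | _, _, .objCongr _ _ _ e => e.cost C
  | _, _, .bagDel _ t _ => C.del t.kind
  | _, _, .bagIns _ t _ => C.del t.kind
  | _, _, .objDel _ _ t _ => C.del t.kind
  | _, _, .objIns _ _ t _ _ => C.del t.kind

/-- Edit steps on possibly empty trees: the root leaf may be deleted, and a
root leaf may be inserted into the empty tree. -/
inductive EstepO (τ : L → DT) : OTree L → OTree L → Type where
  | inner {t t' : PreRLT L} (e : Estep τ t t') : EstepO τ (some t) (some t')
  | delRoot (t : PreRLT L) (h : t.IsLeaf) : EstepO τ (some t) none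
  | insRoot (t : PreRLT L) (h : t.IsLeaf) : EstepO τ none (some t)

def EstepO.cost (C : Cost L DT τ) : {T T' : OTree L} → EstepO τ T T' → ℝ
  | _, _, .inner e => e.cost C
  | _, _, .delRoot t _ => C.del t.kind
  | _, _, .insRoot t _ => C.del t.kind

/-- An edit sequence S = s₁ ∘ ⋯ ∘ s_k transforming one tree into another. -/
inductive Eseq (τ : L → DT) : OTree L → OTree L → Type where
  | nil (T : OTree L) : Eseq τ T T
  | cons {T T' T'' : OTree L} (s : EstepO τ T T') (S : Eseq τ T' T'') : Eseq τ T T''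

/-- γ(S), the total cost of an edit sequence. -/
def Eseq.cost (C : Cost L DT τ) : {T T' : OTree L} → Eseq τ T T' → ℝ
  | _, _, .nil _ => 0
  | _, _, .cons s S => s.cost C + S.cost C

/-- The tree edit distance d(T, T'): the minimum of γ(S) over all edit
sequences S transforming T into T'. -/
noncomputable def editDist (C : Cost L DT τ) (T T' : OTree L) : ℝ :=
  sInf {c : ℝ | ∃ S : Eseq τ T T', S.cost C = c}

end TED
namespace TED

open PreRLT

variable {L DT : Type} {τ : L → DT}

/-- Addresses of nodes in a tree: a child of a Bag node is addressed by its
position, a child of an Object node by its edge label. -/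
inductive Pstep : Type where
  | idx : ℕ → Pstep
  | key : String → Pstep
deriving DecidableEq

abbrev Path := List Pstep

/-- The subtree rooted at the node addressed by a path, if it exists. -/
def subAt : Path → PreRLT L → Option (PreRLT L)
  | [], t => some t
  | .idx n :: p, .bag cs => cs[n]?.bind (subAt p)
  | .key k :: p, .obj cs => (List.lookup k cs).bind (subAt p)
  | _, _ => none

def subAtO (T : OTree L) (p : Path) : Option (PreRLT L) :=
  T.bind (fun t => subAt p t)

/-- `p` addresses a node of `T`. -/
def IsNode (T : OTree L) (p : Path) : Prop := (subAtO T p).isSome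

/-- Two nodes have the same node type and, for Value nodes, the same data
type. -/
def SameTypePair (τ : L → DT) (t₁ t₂ : PreRLT L) : Prop :=
  t₁.nt = t₂.nt ∧ ∀ l₁ l₂, t₁ = .value l₁ → t₂ = .value l₂ → τ l₁ = τ l₂

/-- `q` addresses a (proper) descendant of the node addressed by `p`. -/
def IsDesc (p q : Path) : Prop := p <+: q ∧ q ≠ p

/-- An edit distance mapping (M, T₁, T₂). -/
structure IsMapping (τ : L → DT) (T₁ T₂ : OTree L) (M : Set (Path × Path)) : Prop where
  /-- pairs consist of a node of T₁ and a node of T₂ -/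
  nodes : ∀ pq ∈ M, IsNode T₁ pq.1 ∧ IsNode T₂ pq.2
  /-- paired nodes have the same node type and, for Value nodes, data type -/
  types : ∀ pq ∈ M, ∃ t₁ t₂, subAtO T₁ pq.1 = some t₁ ∧ subAtO T₂ pq.2 = some t₂ ∧
      SameTypePair τ t₁ t₂
  /-- the mapping is one-to-one -/
  one_to_one : ∀ pq ∈ M, ∀ pq' ∈ M, ((pq : Path × Path).1 = (pq' : Path × Path).1 ↔
      (pq : Path × Path).2 = (pq' : Path × Path).2)
  /-- parents of non-root paired nodes are paired as well -/
  parents : ∀ pq ∈ M, (pq : Path × Path).1 ≠ [] → (pq : Path × Path).2 ≠ [] →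
      ((pq : Path × Path).1.dropLast, (pq : Path × Path).2.dropLast) ∈ M
  /-- if (v, w) ∉ M then no descendant of v is paired with a descendant of w -/
  desc : ∀ p q, (p, q) ∉ M → ∀ p' q', IsDesc p p' → IsDesc q q' → (p', q') ∉ M
  /-- paired children of Object nodes are connected by equally labeled edges -/
  edge : ∀ pq ∈ M, ∀ t : PreRLT L, (pq : Path × Path).1 ≠ [] →
      subAtO T₁ (pq : Path × Path).1.dropLast = some t → t.nt = .obj →
      (pq : Path × Path).1.getLast? = (pq : Path × Path).2.getLast?

/-- γ(v → w) for a pair of mapped nodes: the relabeling cost for Value nodes,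
and 0 for the (null-labeled) inner nodes. -/
noncomputable def pairCost (C : Cost L DT τ) (T₁ T₂ : OTree L) (p q : Path) : ℝ :=
  match subAtO T₁ p, subAtO T₂ q with
  | some (.value l₁), some (.value l₂) => C.rel l₁ l₂
  | _, _ => 0

/-- γ(v, λ), the deletion (= insertion) cost of the node of `T` at `p`. -/
noncomputable def delCost (C : Cost L DT τ) (T : OTree L) (p : Path) : ℝ :=
  match subAtO T p with
  | some t => C.del t.kind
  | none => 0

/-- γ(M) = Σ_{(v,w)∈M} γ(v,w) + Σ_{v∈N₁} γ(v,λ) + Σ_{w∈N₂} γ(λ,w), where N₁, N₂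
are the nodes of T₁, T₂ not occurring in M. -/
noncomputable def mapCost (C : Cost L DT τ) (T₁ T₂ : OTree L)
    (M : Set (Path × Path)) : ℝ :=
  (∑ᶠ pq ∈ M, pairCost C T₁ T₂ (pq : Path × Path).1 (pq : Path × Path).2)
    + (∑ᶠ p ∈ {p : Path | IsNode T₁ p ∧ ∀ q, (p, q) ∉ M}, delCost C T₁ p)
    + (∑ᶠ q ∈ {q : Path | IsNode T₂ q ∧ ∀ p, (p, q) ∉ M}, delCost C T₂ q)

/-- How a single edit step moves node addresses: `e.pmap p = some q` iff the
node at `p` persists through `e` (possibly relabeled) as the node at `q`. -/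
def Estep.pmap : {t t' : PreRLT L} → Estep τ t t' → Path → Option Path
  | _, _, .relabel _ _ _, [] => some []
  | _, _, .relabel _ _ _, _ :: _ => none
  | _, _, .bagPerm _ _, [] => some []
  | _, _, .bagPerm cs σ, .idx i :: p =>
      if h : i < cs.length then some (.idx (σ.symm ⟨i, h⟩).val :: p) else none
  | _, _, .bagPerm _ _, .key _ :: _ => none
  | _, _, .objPerm _ _, [] => some []
  | _, _, .objPerm _ _, .key k :: p => some (.key k :: p)
  | _, _, .objPerm _ _, .idx _ :: _ => none
  | _, _, .bagCongr _ _ _, [] => some []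
  | _, _, .bagCongr pre _ e, .idx i :: p =>
      if i = pre.length then (e.pmap p).map (fun q => .idx i :: q)
      else some (.idx i :: p)
  | _, _, .bagCongr _ _ _, .key _ :: _ => none
  | _, _, .objCongr _ _ _ _, [] => some []
  | _, _, .objCongr _ _ k e, .key k' :: p =>
      if k' = k then (e.pmap p).map (fun q => .key k :: q)
      else some (.key k' :: p)
  | _, _, .objCongr _ _ _ _, .idx _ :: _ => none
  | _, _, .bagDel _ _ _, [] => some []
  | _, _, .bagDel _ _ _, .idx 0 :: _ => none
  | _, _, .bagDel _ _ _, .idx (i + 1) :: p => some (.idx i :: p)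
  | _, _, .bagDel _ _ _, .key _ :: _ => none
  | _, _, .bagIns _ _ _, [] => some []
  | _, _, .bagIns _ _ _, .idx i :: p => some (.idx (i + 1) :: p)
  | _, _, .bagIns _ _ _, .key _ :: _ => none
  | _, _, .objDel _ k _ _, [] => some []
  | _, _, .objDel _ k _ _, .key k' :: p =>
      if k' = k then none else some (.key k' :: p)
  | _, _, .objDel _ _ _ _, .idx _ :: _ => none
  | _, _, .objIns _ k _ _ _, [] => some []
  | _, _, .objIns _ k _ _ _, .key k' :: p =>
      if k' = k then none else some (.key k' :: p)
  | _, _, .objIns _ _ _ _ _, .idx _ :: _ => none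

def EstepO.pmap : {T T' : OTree L} → EstepO τ T T' → Path → Option Path
  | _, _, .inner e => e.pmap
  | _, _, .delRoot _ _ => fun _ => none
  | _, _, .insRoot _ _ => fun _ => none

/-- How an edit sequence moves node addresses, by composition. -/
def Eseq.pmap : {T T' : OTree L} → Eseq τ T T' → Path → Option Path
  | _, _, .nil _ => fun p => some p
  | _, _, .cons s S => fun p => (s.pmap p).bind S.pmap

/-- The mapping (M, T₁, T₂) induced by an edit sequence S : T₁ → T₂, pairing
each node of T₁ that persists (possibly relabeled) through S with its image in
T₂. -/
def Eseq.induced {T₁ T₂ : OTree L} (S : Eseq τ T₁ T₂) : Set (Path × Path) :=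
  {pq | IsNode T₁ pq.1 ∧ S.pmap pq.1 = some pq.2}

/-- The sum Σ_v γ(v, λ) of the deletion (equivalently, insertion) costs over
all nodes of a tree. -/
noncomputable def delSum (C : Cost L DT τ) : PreRLT L → ℝ
  | .value l => C.del (.value l)
  | .bag cs => C.del .bag + (cs.attach.map (fun c => delSum C c.1)).sum
  | .obj cs => C.del .obj + (cs.attach.map (fun c => delSum C c.1.2)).sum
  termination_by t => sizeOf t
  decreasing_by
  · have := List.sizeOf_lt_of_mem c.2
    simp only [PreRLT.bag.sizeOf_spec]
    omega
  · have h1 := List.sizeOf_lt_of_mem c.2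
    have h2 : sizeOf c.1.2 < sizeOf c.1 := by
      obtain ⟨a, b⟩ := c.1
      simp [Prod.mk.sizeOf_spec]
    simp only [PreRLT.obj.sizeOf_spec]
    omega

/-- Equality of trees under the multiset semantics of Bag children and the
finite-map semantics of Object children. -/
inductive TEquiv : PreRLT L → PreRLT L → Prop where
  | value (l : L) : TEquiv (.value l) (.value l)
  | bag {cs cs' : List (PreRLT L)} (l : List (PreRLT L × PreRLT L))
      (h₁ : l.map Prod.fst = cs) (h₂ : (l.map Prod.snd).Perm cs')
      (h₃ : ∀ pq ∈ l, TEquiv pq.1 pq.2) :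
      TEquiv (.bag cs) (.bag cs')
  | obj {cs cs' : List (String × PreRLT L)}
      (l : List ((String × PreRLT L) × (String × PreRLT L)))
      (h₁ : l.map Prod.fst = cs) (h₂ : (l.map Prod.snd).Perm cs')
      (hk : ∀ pq ∈ l, pq.1.1 = pq.2.1)
      (h₃ : ∀ pq ∈ l, TEquiv pq.1.2 pq.2.2) :
      TEquiv (.obj cs) (.obj cs')

/-- Equality of possibly empty trees under the multiset semantics. -/
def OEquiv : OTree L → OTree L → Prop
  | none, none => True
  | some t, some t' => TEquiv t t'
  | _, _ => False

end TED

namespace TED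

open PreRLT

section Proof

variable {L DT : Type} {τ : L → DT}

theorem Cost.rel_nonneg (C : Cost L DT τ) (l l' : L) (h : τ l = τ l') : 0 ≤ C.rel l l' := by
  have h1 := C.rel_triangle l l' l h h.symm
  rw [C.rel_self, C.rel_symm l' l] at h1
  linarith

theorem Estep.cost_nonneg (C : Cost L DT τ) {t t' : PreRLT L} (e : Estep τ t t') :
    0 ≤ e.cost C := by
  induction e with
  | relabel l l' h => exact C.rel_nonneg l l' h
  | bagPerm cs σ => exact le_refl _
  | objPerm cs σ => exact le_refl _
  | bagCongr pre post e ih => exact ih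
  | objCongr pre post k e ih => exact ih
  | bagDel cs t h => exact C.del_nonneg _
  | bagIns cs t h => exact C.del_nonneg _
  | objDel cs k t h => exact C.del_nonneg _
  | objIns cs k t h hk => exact C.del_nonneg _

theorem EstepO.cost_nonneg (C : Cost L DT τ) {T T' : OTree L} (e : EstepO τ T T') :
    0 ≤ e.cost C := by
  cases e with
  | inner e => exact e.cost_nonneg C
  | delRoot t h => exact C.del_nonneg _
  | insRoot t h => exact C.del_nonneg _

theorem Eseq.cost_nonneg (C : Cost L DT τ) {T T' : OTree L} (S : Eseq τ T T') :
    0 ≤ S.cost C := by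
  induction S with
  | nil T => exact le_refl _
  | cons s S ih => exact add_nonneg (s.cost_nonneg C) ih

theorem editDist_le (C : Cost L DT τ) {T T' : OTree L} (S : Eseq τ T T') :
    editDist C T T' ≤ S.cost C :=
  csInf_le ⟨0, by rintro _ ⟨S, rfl⟩; exact S.cost_nonneg C⟩ ⟨S, rfl⟩

theorem editDist_nonneg (C : Cost L DT τ) (T T' : OTree L) : 0 ≤ editDist C T T' :=
  Real.sInf_nonneg (by rintro _ ⟨S, rfl⟩; exact S.cost_nonneg C)

theorem editDist_self (C : Cost L DT τ) (T : OTree L) : editDist C T T = 0 :=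
  le_antisymm (editDist_le C (Eseq.nil T)) (editDist_nonneg C T T)

theorem exists_lt (C : Cost L DT τ) {T T' : OTree L} (hne : Nonempty (Eseq τ T T'))
    {ε : ℝ} (hε : 0 < ε) : ∃ S : Eseq τ T T', S.cost C < editDist C T T' + ε := by
  obtain ⟨S⟩ := hne
  obtain ⟨_, ⟨S', rfl⟩, h⟩ := Real.lt_sInf_add_pos
    (s := {c : ℝ | ∃ S : Eseq τ T T', S.cost C = c}) ⟨_, S, rfl⟩ hε
  exact ⟨S', h⟩

theorem editDist_step (C : Cost L DT τ) {T T' T'' : OTree L} (s : EstepO τ T T')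
    (hne : Nonempty (Eseq τ T' T'')) :
    editDist C T T'' ≤ s.cost C + editDist C T' T'' := by
  refine le_of_forall_pos_le_add fun ε hε => ?_
  obtain ⟨S, hS⟩ := exists_lt C hne hε
  have := editDist_le C (Eseq.cons s S)
  simp only [Eseq.cost] at this
  linarith

/-- `T'` is reachable from `T` at cost at most `c`. -/
def Reach (C : Cost L DT τ) (T T' : OTree L) (c : ℝ) : Prop :=
  ∃ S : Eseq τ T T', S.cost C ≤ c

theorem Reach.refl (C : Cost L DT τ) (T : OTree L) : Reach C T T 0 :=
  ⟨Eseq.nil T, le_refl _⟩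

theorem Reach.step (C : Cost L DT τ) {T T' T'' : OTree L} {c : ℝ} (s : EstepO τ T T')
    (h : Reach C T' T'' c) : Reach C T T'' (s.cost C + c) := by
  obtain ⟨S, hS⟩ := h
  exact ⟨Eseq.cons s S, by simp only [Eseq.cost]; linarith⟩

theorem Reach.mono {C : Cost L DT τ} {T T' : OTree L} {c c' : ℝ}
    (h : Reach C T T' c) (hc : c ≤ c') : Reach C T T' c' := by
  obtain ⟨S, hS⟩ := h
  exact ⟨S, hS.trans hc⟩

theorem Reach.trans {C : Cost L DT τ} {T T' T'' : OTree L} {c c' : ℝ}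
    (h : Reach C T T' c) (h' : Reach C T' T'' c') : Reach C T T'' (c + c') := by
  obtain ⟨S, hS⟩ := h
  induction S generalizing c with
  | nil T => exact h'.mono (by simp only [Eseq.cost] at hS; linarith)
  | cons s S ih =>
    simp only [Eseq.cost] at hS
    exact (Reach.step C s (ih h' (le_refl _))).mono (by linarith)

/-- The (empty or one-element) association list of an optional child. -/
def opt (k : String) : OTree L → List (String × PreRLT L)
  | none => []
  | some t => [(k, t)]

def optB : OTree L → List (PreRLT L)
  | none => []
  | some t => [t]

theorem Reach.liftObj {C : Cost L DT τ} {T T' : OTree L} {c : ℝ} (h : Reach C T T' c)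
    (k : String) (cs : List (String × PreRLT L)) (hk : k ∉ cs.map Prod.fst) :
    Reach C (some (.obj (opt k T ++ cs))) (some (.obj (opt k T' ++ cs))) c := by
  obtain ⟨S, hS⟩ := h
  refine Reach.mono ?_ hS
  clear hS
  induction S with
  | nil T => exact Reach.refl C _
  | cons s S ih =>
    simp only [Eseq.cost]
    cases s with
    | inner e => exact Reach.step C (.inner (.objCongr [] cs k e)) ih
    | delRoot t h => exact Reach.step C (.inner (.objDel cs k t h)) ih
    | insRoot t h => exact Reach.step C (.inner (.objIns cs k t h hk)) ih

theorem liftBag {T T' : OTree L} (S : Eseq τ T T') (cs : List (PreRLT L)) :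
    Nonempty (Eseq τ (some (.bag (optB T ++ cs))) (some (.bag (optB T' ++ cs)))) := by
  induction S with
  | nil T => exact ⟨.nil _⟩
  | cons s S ih =>
    obtain ⟨S'⟩ := ih
    cases s with
    | inner e => exact ⟨.cons (.inner (.bagCongr [] cs e)) S'⟩
    | delRoot t h => exact ⟨.cons (.inner (.bagDel cs t h)) S'⟩
    | insRoot t h => exact ⟨.cons (.inner (.bagIns cs t h)) S'⟩

theorem liftObj {T T' : OTree L} (S : Eseq τ T T') (k : String)
    (cs : List (String × PreRLT L)) (hk : k ∉ cs.map Prod.fst) :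
    Nonempty (Eseq τ (some (.obj (opt k T ++ cs))) (some (.obj (opt k T' ++ cs)))) := by
  induction S with
  | nil T => exact ⟨.nil _⟩
  | cons s S ih =>
    obtain ⟨S'⟩ := ih
    cases s with
    | inner e => exact ⟨.cons (.inner (.objCongr [] cs k e)) S'⟩
    | delRoot t h => exact ⟨.cons (.inner (.objDel cs k t h)) S'⟩
    | insRoot t h => exact ⟨.cons (.inner (.objIns cs k t h hk)) S'⟩

def Eseq.append {T T' T'' : OTree L} (S : Eseq τ T T') (S' : Eseq τ T' T'') : Eseq τ T T'' :=
  match S with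
  | .nil _ => S'
  | .cons s S => .cons s (S.append S')

theorem WF.nonempty {t : PreRLT L} (h : t.WF) :
    Nonempty (Eseq τ (some t) none) ∧ Nonempty (Eseq τ none (some t)) := by
  induction h with
  | value l => exact ⟨⟨.cons (.delRoot _ rfl) (.nil _)⟩, ⟨.cons (.insRoot _ (by rfl)) (.nil _)⟩⟩
  | @bag cs _ ih =>
    induction cs with
    | nil => exact ⟨⟨.cons (.delRoot _ rfl) (.nil _)⟩, ⟨.cons (.insRoot _ (by rfl)) (.nil _)⟩⟩
    | cons c cs ih2 =>
      obtain ⟨⟨S₁⟩, ⟨S₂⟩⟩ := ih c (by simp)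
      obtain ⟨⟨S₃⟩, ⟨S₄⟩⟩ := ih2 (fun c hc => by simp_all) (fun c hc => ih c (by simp [hc]))
      obtain ⟨S₅⟩ := liftBag S₁ cs
      obtain ⟨S₆⟩ := liftBag S₂ cs
      exact ⟨⟨S₅.append S₃⟩, ⟨S₄.append S₆⟩⟩
  | @obj cs hnd hwf ih =>
    induction cs with
    | nil => exact ⟨⟨.cons (.delRoot _ rfl) (.nil _)⟩, ⟨.cons (.insRoot _ (by rfl)) (.nil _)⟩⟩
    | cons c cs ih2 =>
      obtain ⟨k, c⟩ := c
      rw [List.map_cons, List.nodup_cons] at hnd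
      obtain ⟨⟨S₁⟩, ⟨S₂⟩⟩ := ih (k, c) (by simp)
      obtain ⟨⟨S₃⟩, ⟨S₄⟩⟩ := ih2 hnd.2 (fun c hc => hwf c (by simp [hc])) (fun c hc => ih c (by simp [hc]))
      obtain ⟨S₅⟩ := liftObj S₁ k cs hnd.1
      obtain ⟨S₆⟩ := liftObj S₂ k cs hnd.1
      exact ⟨⟨S₅.append S₃⟩, ⟨S₄.append S₆⟩⟩

theorem WFO.nonempty {T T' : OTree L} (h : WFO T) (h' : WFO T') : Nonempty (Eseq τ T T') := by
  have h1 : Nonempty (Eseq τ T none) := by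
    cases T with
    | none => exact ⟨.nil _⟩
    | some t => exact (WF.nonempty h).1
  have h2 : Nonempty (Eseq τ none T') := by
    cases T' with
    | none => exact ⟨.nil _⟩
    | some t => exact (WF.nonempty h').2
  exact ⟨h1.some.append h2.some⟩

theorem ofFn_perm {α : Type} (cs : List α) (σ : Equiv.Perm (Fin cs.length)) :
    (List.ofFn fun i => cs.get (σ i)).Perm cs := by
  have := σ.ofFn_comp_perm cs.get
  rwa [List.ofFn_get] at this

theorem wf_leaf {t : PreRLT L} (h : t.IsLeaf) : t.WF := by
  cases t with
  | value l => exact .value l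
  | bag cs =>
    simp only [IsLeaf, children] at h
    subst h
    exact .bag (by simp)
  | obj cs =>
    simp only [IsLeaf, children, List.map_eq_nil_iff] at h
    subst h
    exact .obj (by simp) (by simp)

theorem Estep.wf {t t' : PreRLT L} (e : Estep τ t t') (h : t.WF) : t'.WF := by
  induction e with
  | relabel l l' h => exact .value _
  | bagPerm cs σ =>
    cases h with
    | bag h => exact .bag fun c hc => h c ((ofFn_perm cs σ).mem_iff.1 hc)
  | objPerm cs σ =>
    cases h with
    | obj hn h =>
      exact .obj (((ofFn_perm cs σ).map Prod.fst).nodup_iff.2 hn)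
        fun c hc => h c ((ofFn_perm cs σ).mem_iff.1 hc)
  | bagCongr pre post e ih =>
    cases h with
    | bag h =>
      refine .bag fun c hc => ?_
      have := ih (h _ (by simp))
      simp only [List.mem_append, List.mem_cons] at hc h
      rcases hc with hc | rfl | hc
      · exact h c (by simp [hc])
      · exact this
      · exact h c (by simp [hc])
  | objCongr pre post k e ih =>
    cases h with
    | obj hn h =>
      refine .obj (by simpa using hn) fun c hc => ?_
      have := ih (h _ (List.mem_append_right _ List.mem_cons_self))
      simp only [List.mem_append, List.mem_cons] at hc h
      rcases hc with hc | rfl | hc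
      · exact h c (by simp [hc])
      · exact this
      · exact h c (by simp [hc])
  | bagDel cs t h' =>
    cases h with
    | bag h => exact .bag fun c hc => h c (by simp [hc])
  | bagIns cs t h' =>
    cases h with
    | bag h =>
      refine .bag fun c hc => ?_
      rcases List.mem_cons.1 hc with rfl | hc
      · exact wf_leaf h'
      · exact h c hc
  | objDel cs k t h' =>
    cases h with
    | obj hn h =>
      rw [List.map_cons, List.nodup_cons] at hn
      exact .obj hn.2 fun c hc => h c (by simp [hc])
  | objIns cs k t h' hk =>
    cases h with
    | obj hn h =>
      refine .obj (by rw [List.map_cons, List.nodup_cons]; exact ⟨hk, hn⟩) fun c hc => ?_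
      rcases List.mem_cons.1 hc with rfl | hc
      · exact wf_leaf h'
      · exact h c hc

theorem EstepO.wf {T T' : OTree L} (e : EstepO τ T T') (h : WFO T) : WFO T' := by
  cases e with
  | inner e => exact e.wf h
  | delRoot t h => trivial
  | insRoot t h' => exact wf_leaf h'

theorem lookup_iff {α : Type} {cs : List (String × α)} (h : (cs.map Prod.fst).Nodup)
    (k : String) (v : α) : List.lookup k cs = some v ↔ (k, v) ∈ cs := by
  induction cs with
  | nil => simp
  | cons c cs ih =>
    obtain ⟨k', c⟩ := c
    rw [List.map_cons, List.nodup_cons] at h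
    rw [List.lookup_cons]
    by_cases hk : k = k'
    · subst hk
      have : (k, v) ∉ cs := fun hm => h.1 (List.mem_map.2 ⟨_, hm, rfl⟩)
      simp [this, eq_comm]
    · simp [beq_false_of_ne hk, hk, ih h.2]

theorem lookup_none {α : Type} {cs : List (String × α)} {k : String}
    (h : k ∉ cs.map Prod.fst) : List.lookup k cs = none := by
  rw [List.lookup_eq_none_iff]
  intro p hp
  simp only [bne_iff_ne]
  rintro rfl
  exact h (List.mem_map.2 ⟨_, hp, rfl⟩)

theorem lookup_perm {α : Type} {cs cs' : List (String × α)} (h : (cs.map Prod.fst).Nodup)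
    (hp : cs'.Perm cs) (k : String) : List.lookup k cs' = List.lookup k cs := by
  ext v
  rw [lookup_iff h, lookup_iff ((hp.map Prod.fst).nodup_iff.2 h), hp.mem_iff]

theorem wf_lookup {cs : List (String × PreRLT L)} (h : (PreRLT.obj cs).WF) (k : String) :
    WFO (List.lookup k cs) := by
  cases h with
  | obj hn h =>
    cases hl : List.lookup k cs with
    | none => trivial
    | some t => exact h (k, t) ((lookup_iff hn k t).1 hl)

/-- The potential used for the lower bound. -/
noncomputable def pot (C : Cost L DT τ) (bs : List (String × PreRLT L)) (K : Finset String) :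
    OTree L → ℝ
  | some (.obj cs) => ∑ k ∈ K, editDist C (List.lookup k cs) (List.lookup k bs)
  | _ => ∑ k ∈ K, editDist C none (List.lookup k bs)

theorem sum_le_aux (K : Finset String) (f g : String → ℝ) (c : ℝ) (hc : 0 ≤ c) (k₀ : String)
    (h₀ : f k₀ ≤ c + g k₀) (h : ∀ k, k ≠ k₀ → f k = g k) :
    ∑ k ∈ K, f k ≤ c + ∑ k ∈ K, g k := by
  by_cases hk : k₀ ∈ K
  · rw [← Finset.add_sum_erase K f hk, ← Finset.add_sum_erase K g hk,
      Finset.sum_congr rfl fun k hk => h k (Finset.ne_of_mem_erase hk)]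
    linarith
  · rw [Finset.sum_congr rfl fun k hk' => h k (by rintro rfl; exact hk hk')]
    linarith

theorem pot_step_key (C : Cost L DT τ) {bs : List (String × PreRLT L)}
    (hB : (PreRLT.obj bs).WF) (K : Finset String) {cs cs' : List (String × PreRLT L)} {T T' : OTree L}
    (s : EstepO τ T T') (hT : WFO T) (k : String) (h1 : List.lookup k cs = T)
    (h2 : List.lookup k cs' = T')
    (h : ∀ k', k' ≠ k → List.lookup k' cs = List.lookup k' cs') :
    pot C bs K (some (.obj cs)) ≤ s.cost C + pot C bs K (some (.obj cs')) := by
  refine sum_le_aux K _ _ _ (s.cost_nonneg C) k ?_ fun k' hk' => by rw [h k' hk']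
  rw [h1, h2]
  exact editDist_step C s (WFO.nonempty (s.wf hT) (wf_lookup hB k))

theorem pot_step (C : Cost L DT τ) {bs : List (String × PreRLT L)}
    (hB : (PreRLT.obj bs).WF) (K : Finset String) {T T' : OTree L}
    (s : EstepO τ T T') (hT : WFO T) :
    pot C bs K T ≤ s.cost C + pot C bs K T' := by
  have hc := s.cost_nonneg C
  cases s with
  | delRoot t h =>
    refine le_add_of_nonneg_of_le hc (le_of_eq ?_)
    cases t with
    | obj cs =>
      simp only [IsLeaf, children, List.map_eq_nil_iff] at h
      subst h
      simp [pot]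
    | _ => rfl
  | insRoot t h =>
    refine le_add_of_nonneg_of_le hc (le_of_eq ?_)
    cases t with
    | obj cs =>
      simp only [IsLeaf, children, List.map_eq_nil_iff] at h
      subst h
      simp [pot]
    | _ => rfl
  | inner e =>
    cases e with
    | relabel l l' h => exact le_add_of_nonneg_of_le hc (le_of_eq rfl)
    | bagPerm cs σ => exact le_add_of_nonneg_of_le hc (le_of_eq rfl)
    | bagCongr pre post e => exact le_add_of_nonneg_of_le hc (le_of_eq rfl)
    | bagDel cs t h => exact le_add_of_nonneg_of_le hc (le_of_eq rfl)
    | bagIns cs t h => exact le_add_of_nonneg_of_le hc (le_of_eq rfl)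
    | objPerm cs σ =>
      refine le_add_of_nonneg_of_le hc (le_of_eq ?_)
      cases hT with
      | obj hn h =>
        simp only [pot]
        exact Finset.sum_congr rfl fun k _ => by rw [lookup_perm hn (ofFn_perm cs σ)]
    | @objCongr pre post k t t' e =>
      cases hT with
      | obj hn h =>
        have hpre : k ∉ pre.map Prod.fst := by
          rw [List.map_append, List.nodup_append] at hn
          intro hk
          exact hn.2.2 k hk k (by simp) rfl
        refine pot_step_key C hB K (EstepO.inner e) (h (k, t) (by simp)) k ?_ ?_ ?_
        · rw [List.lookup_append, lookup_none hpre]; simp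
        · rw [List.lookup_append, lookup_none hpre]; simp
        · intro k' hk'
          simp [List.lookup_append, List.lookup_cons, beq_false_of_ne hk']
    | objDel cs k t h' =>
      cases hT with
      | obj hn h =>
        rw [List.map_cons, List.nodup_cons] at hn
        refine pot_step_key C hB K (EstepO.delRoot t h') (h (k, t) (by simp)) k
          (by simp) (lookup_none hn.1) ?_
        intro k' hk'
        simp [List.lookup_cons, beq_false_of_ne hk']
    | objIns cs k t h' hk =>
      refine pot_step_key C hB K (EstepO.insRoot t h') trivial k (lookup_none hk) (by simp) ?_
      intro k' hk'
      simp [List.lookup_cons, beq_false_of_ne hk']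

theorem pot_seq (C : Cost L DT τ) {bs : List (String × PreRLT L)}
    (hB : (PreRLT.obj bs).WF) (K : Finset String) {T T' : OTree L}
    (S : Eseq τ T T') (hT : WFO T) :
    pot C bs K T ≤ S.cost C + pot C bs K T' := by
  induction S with
  | nil T => simp [Eseq.cost]
  | cons s S ih =>
    have h1 := pot_step C hB K s hT
    have h2 := ih (s.wf hT)
    simp only [Eseq.cost]
    linarith

theorem lower (C : Cost L DT τ) {as bs : List (String × PreRLT L)}
    (hA : (PreRLT.obj as).WF) (hB : (PreRLT.obj bs).WF) (K : Finset String) :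
    ∑ k ∈ K, editDist C (List.lookup k as) (List.lookup k bs)
      ≤ editDist C (some (.obj as)) (some (.obj bs)) := by
  obtain ⟨S₀⟩ := WFO.nonempty (τ := τ) (T := some (.obj as)) (T' := some (.obj bs)) hA hB
  refine le_csInf ⟨_, S₀, rfl⟩ ?_
  rintro _ ⟨S, rfl⟩
  have := pot_seq C hB K S hA
  simpa [pot, editDist_self] using this

theorem exists_perm_fun {α : Type} {l l' : List α} (hn : l.Nodup) (h : l.Perm l') :
    ∃ σ : Equiv.Perm (Fin l.length), l' = List.ofFn fun i => l.get (σ i) := by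
  classical
  have hn' : l'.Nodup := h.nodup_iff.1 hn
  let e : {x // x ∈ l'} ≃ {x // x ∈ l} := Equiv.subtypeEquivRight fun x => h.mem_iff.symm
  let σ : Equiv.Perm (Fin l.length) :=
    (finCongr h.length_eq).trans ((hn'.getEquiv l').trans (e.trans (hn.getEquiv l).symm))
  refine ⟨σ, ?_⟩
  refine List.ext_get (by simp [h.length_eq]) fun i h1 h2 => ?_
  rw [List.get_ofFn]
  have : ∀ j, l.get (σ j) = l'.get (finCongr h.length_eq j) := by
    intro j
    have : (hn.getEquiv l) (σ j) = e ((hn'.getEquiv l') (finCongr h.length_eq j)) := by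
      simp [σ]
    exact congrArg Subtype.val this
  rw [this]
  rfl

theorem Reach.perm (C : Cost L DT τ) {cs cs' : List (String × PreRLT L)}
    (hn : (cs.map Prod.fst).Nodup) (h : cs.Perm cs') :
    Reach C (some (.obj cs)) (some (.obj cs')) 0 := by
  obtain ⟨σ, rfl⟩ := exists_perm_fun (List.Nodup.of_map _ hn) h
  exact (Reach.step C (.inner (.objPerm cs σ)) (Reach.refl C _)).mono
    (by simp [EstepO.cost, Estep.cost])

/-- The association list of a partial map on a list of keys. -/
def build (K : List String) (f : String → OTree L) : List (String × PreRLT L) :=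
  K.flatMap fun k => opt k (f k)

theorem build_keys (K : List String) (f : String → OTree L) :
    ((build K f).map Prod.fst).Sublist K := by
  induction K with
  | nil => simp [build]
  | cons k K ih =>
    have : build (k :: K) f = opt k (f k) ++ build K f := rfl
    rw [this]
    cases f k with
    | none => simpa [opt] using ih.cons k
    | some t => simpa [opt] using ih

theorem mem_build (K : List String) (f : String → OTree L) (k : String) (t : PreRLT L) :
    (k, t) ∈ build K f ↔ k ∈ K ∧ f k = some t := by
  simp only [build, List.mem_flatMap]
  constructor
  · rintro ⟨k', hk', h⟩
    cases hf : f k' with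
    | none => simp [hf, opt] at h
    | some t' =>
      simp [hf, opt] at h
      obtain ⟨rfl, rfl⟩ := h
      exact ⟨hk', hf⟩
  · rintro ⟨hk, h⟩
    exact ⟨k, hk, by simp [h, opt]⟩

theorem build_perm {K : List String} (hK : K.Nodup) {cs : List (String × PreRLT L)}
    (hn : (cs.map Prod.fst).Nodup) (hs : ∀ k ∈ cs.map Prod.fst, k ∈ K) :
    cs.Perm (build K fun k => List.lookup k cs) := by
  rw [List.perm_ext_iff_of_nodup (List.Nodup.of_map _ hn)
    (List.Nodup.of_map _ ((build_keys K _).nodup hK))]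
  rintro ⟨k, t⟩
  rw [mem_build, lookup_iff hn]
  exact ⟨fun h => ⟨hs k (List.mem_map.2 ⟨_, h, rfl⟩), h⟩, fun h => h.2⟩

theorem opt_keys (k : String) (T : OTree L) : ((opt k T).map Prod.fst).Sublist [k] := by
  cases T <;> simp [opt]

theorem Reach.build (C : Cost L DT τ) (K : List String) (f g : String → OTree L)
    (c : String → ℝ) (h : ∀ k ∈ K, Reach C (f k) (g k) (c k))
    (cs : List (String × PreRLT L)) (hn : (K ++ cs.map Prod.fst).Nodup) :
    Reach C (some (.obj (build K f ++ cs))) (some (.obj (build K g ++ cs)))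
      (K.map c).sum := by
  induction K generalizing cs with
  | nil => exact Reach.refl C _
  | cons k K ih =>
    have e : ∀ f : String → OTree L, TED.build (k :: K) f = opt k (f k) ++ TED.build K f :=
      fun _ => rfl
    rw [e, e, List.append_assoc, List.append_assoc, List.map_cons, List.sum_cons]
    rw [List.cons_append, List.nodup_cons] at hn
    have hsub : ∀ f : String → OTree L,
        ((TED.build K f ++ cs).map Prod.fst).Sublist (K ++ cs.map Prod.fst) := by
      intro f
      rw [List.map_append]
      exact (build_keys K f).append (List.Sublist.refl _)
    have r1 := (h k (by simp)).liftObj k (TED.build K f ++ cs)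
      (fun hk => hn.1 ((hsub f).subset hk))
    have hperm : ∀ f : String → OTree L, (opt k (g k) ++ (TED.build K f ++ cs)).Perm
        (TED.build K f ++ (opt k (g k) ++ cs)) := by
      intro f
      rw [← List.append_assoc, ← List.append_assoc]
      exact List.perm_append_comm.append_right _
    have hnd : ∀ f : String → OTree L,
        ((opt k (g k) ++ (TED.build K f ++ cs)).map Prod.fst).Nodup := by
      intro f
      rw [List.map_append]
      refine ((opt_keys k (g k)).append (hsub f)).nodup ?_
      simpa using hn
    have r2 := Reach.perm C (hnd f) (hperm f)
    have r4 := Reach.perm C (((hperm g).map Prod.fst).nodup_iff.1 (hnd g)) (hperm g).symm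
    have r3 := ih (fun k hk => h k (by simp [hk])) (opt k (g k) ++ cs) (by
      have h1 : (K ++ (opt k (g k) ++ cs).map Prod.fst).Sublist
          (K ++ ([k] ++ cs.map Prod.fst)) := by
        rw [List.map_append]
        exact (List.Sublist.refl _).append ((opt_keys k (g k)).append (List.Sublist.refl _))
      refine h1.nodup ?_
      have h2 : (k :: (K ++ cs.map Prod.fst)).Perm (K ++ ([k] ++ cs.map Prod.fst)) :=
        List.perm_middle.symm
      rw [← h2.nodup_iff, List.nodup_cons]
      exact hn)
    exact (r1.trans (r2.trans (r3.trans r4))).mono (by linarith)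

theorem upper (C : Cost L DT τ) {as bs : List (String × PreRLT L)}
    (hA : (PreRLT.obj as).WF) (hB : (PreRLT.obj bs).WF) (K : Finset String)
    (hKa : ∀ k ∈ as.map Prod.fst, k ∈ K) (hKb : ∀ k ∈ bs.map Prod.fst, k ∈ K) :
    editDist C (some (.obj as)) (some (.obj bs))
      ≤ ∑ k ∈ K, editDist C (List.lookup k as) (List.lookup k bs) := by
  have hna : (as.map Prod.fst).Nodup := by cases hA; assumption
  have hnb : (bs.map Prod.fst).Nodup := by cases hB; assumption
  refine le_of_forall_pos_le_add fun ε hε => ?_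
  have hδ : 0 < ε / (K.card + 1) := by positivity
  have pa := build_perm K.nodup_toList hna (by simpa using hKa)
  have pb := build_perm K.nodup_toList hnb (by simpa using hKb)
  have r1 := Reach.perm C hna pa
  have r3 := Reach.perm C ((pb.map Prod.fst).nodup_iff.1 hnb) pb.symm
  have r2 := Reach.build C K.toList (fun k => List.lookup k as) (fun k => List.lookup k bs)
    (fun k => editDist C (List.lookup k as) (List.lookup k bs) + ε / (K.card + 1))
    (fun k _ => by
      obtain ⟨S, hS⟩ := exists_lt C
        (WFO.nonempty (τ := τ) (wf_lookup hA k) (wf_lookup hB k)) hδ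
      exact ⟨S, hS.le⟩) [] (by simpa using K.nodup_toList)
  rw [List.append_nil, List.append_nil] at r2
  obtain ⟨S, hS⟩ := r1.trans (r2.trans r3)
  refine (editDist_le C S).trans (hS.trans ?_)
  rw [Finset.sum_map_toList, Finset.sum_add_distrib, Finset.sum_const, nsmul_eq_mul]
  have : (K.card : ℝ) * (ε / (K.card + 1)) ≤ ε := by
    rw [mul_div_assoc', div_le_iff₀ (by positivity)]
    nlinarith
  linarith

end Proof

end TED


/-- for trees A, B whose roots are Object nodes with edge-label
sets κ(a), κ(b) and child subtrees A_k, B_k,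
d(A, B) = Σ_{k ∈ κ(a) ∩ κ(b)} d(A_k, B_k) + Σ_{k ∈ κ(a) \ κ(b)} d(A_k, Λ)
        + Σ_{k ∈ κ(b) \ κ(a)} d(Λ, B_k). -/
theorem editDist_obj_obj {L DT : Type} (τ : L → DT) (C : TED.Cost L DT τ)
    (as bs : List (String × TED.PreRLT L))
    (hA : (TED.PreRLT.obj as).WF) (hB : (TED.PreRLT.obj bs).WF) :
    TED.editDist C (some (TED.PreRLT.obj as)) (some (TED.PreRLT.obj bs))
      = (∑ k ∈ (as.map Prod.fst).toFinset ∩ (bs.map Prod.fst).toFinset,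
          TED.editDist C (List.lookup k as) (List.lookup k bs))
        + (∑ k ∈ (as.map Prod.fst).toFinset \ (bs.map Prod.fst).toFinset,
            TED.editDist C (List.lookup k as) none)
        + (∑ k ∈ (bs.map Prod.fst).toFinset \ (as.map Prod.fst).toFinset,
            TED.editDist C none (List.lookup k bs)) := by
  have hl := TED.lower C hA hB ((as.map Prod.fst).toFinset ∪ (bs.map Prod.fst).toFinset)
  have hu := TED.upper C hA hB ((as.map Prod.fst).toFinset ∪ (bs.map Prod.fst).toFinset)
    (fun k hk => Finset.mem_union_left _ (List.mem_toFinset.2 hk))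
    (fun k hk => Finset.mem_union_right _ (List.mem_toFinset.2 hk))
  rw [le_antisymm hu hl]
  generalize hKa : (as.map Prod.fst).toFinset = Ka
  generalize hKb : (bs.map Prod.fst).toFinset = Kb
  have h1 : ∑ k ∈ Ka \ Kb, TED.editDist C (List.lookup k as) none
      = ∑ k ∈ Ka \ Kb, TED.editDist C (List.lookup k as) (List.lookup k bs) := by
    refine Finset.sum_congr rfl fun k hk => ?_
    rw [TED.lookup_none (cs := bs) fun h => (Finset.mem_sdiff.1 hk).2
      (hKb ▸ List.mem_toFinset.2 h)]
  have h2 : ∑ k ∈ Kb \ Ka, TED.editDist C none (List.lookup k bs)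
      = ∑ k ∈ Kb \ Ka, TED.editDist C (List.lookup k as) (List.lookup k bs) := by
    refine Finset.sum_congr rfl fun k hk => ?_
    rw [TED.lookup_none (cs := as) fun h => (Finset.mem_sdiff.1 hk).2
      (hKa ▸ List.mem_toFinset.2 h)]
  rw [h1, h2, Finset.sum_inter_add_sum_sdiff, ← Finset.union_sdiff_self_eq_union,
    Finset.sum_union Finset.disjoint_sdiff]
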